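/- arXiv:1711.08574 — 2 statements merged into one kernel-verified Lean document; each statement's English description precedes it below -/
import Mathlib

section
/- Let R and S be k-algebras and let F : D(R) → D(S) be a k-linear triangulated equivalence between their unbounded derived categories. If X is an object of D(R) whose cohomology is bounded above (i.e. there exists an integer N such that H^n(X) = 0 for all n ≥ N), then the cohomology of F(X) is also bounded above (there exists an integer M such that H^n(F(X)) = 0 for all n ≥ M). (This is the content of the statement that any triangulated equivalence between D(R) and D(S) restricts to an equivalence between D^-(R) and D^-(S).) -/
/-! Let `X ∈ D(R)` be bounded above. After truncation `X` is a complex `K` with `Kⁿ = 0` for `n > N`,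
so the shift `K⟦i⟧` vanishes above degree `N - i`. Hence in each degree only finitely many of the
complexes `K⟦i⟧`, `i ∈ ℕ`, are nonzero, and the canonical map `⨁ᵢ K⟦i⟧ ⟶ ∏ᵢ K⟦i⟧` is an isomorphism
(`isIso_sumToPi`). The object `Y = ⨁ᵢ K⟦i⟧` of `D(R)` is therefore both a coproduct and a (weak)
product of the `X⟦i⟧` (`sum_weakDesc`, `sum_derived_hom_ext`, `sum_weakLift`), and an equivalence `F`
preserves these properties.

On the side of `S`, represent `F(X⟦i⟧)` by complexes `Lᵢ`. The product property of `F(Y)` gives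
a map `∏ᵢ Lᵢ ⟶ F(Y)`, its coproduct property gives a map `F(Y) ⟶ ⨁ᵢ Lᵢ`, and the composite
`∏ᵢ Lᵢ ⟶ ⨁ᵢ Lᵢ` is compatible with the projections to the `Lᵢ`. An arbitrary family of classes
in the `H⁰(Lᵢ)` lifts to `H⁰(∏ᵢ Lᵢ)` (`pi_homology_lift`), whereas a class in `H⁰(⨁ᵢ Lᵢ)` has only
finitely many nonzero components (`sum_homology_finite`). Hence `H⁰(Lᵢ) = Hⁱ(F(X))` vanishes
for all large `i`. This is `exists_isZero_homology_of_isEquivalence`.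

Products and coproducts in the derived category are handled through calculus of fractions: a family
of morphisms into (resp. out of) `Kᵢ` is a family of fractions, whose denominators are
quasi-isomorphisms; these are stable under products (`quasiIso_piLift`) and, under the degree bounds
above, under direct sums (`quasiIso_sumDesc`).
-/

open CategoryTheory CategoryTheory.Limits

namespace BoundedAbove
universe w w' v v'
variable {R : Type} [Ring R]

/-! ### Products and direct sums of sequences of complexes of modules -/

/-- The product of a sequence of complexes, with the module of dependent functions in each
degree. -/
def piC (K : ℕ → CochainComplex (ModuleCat.{v} R) ℤ) : CochainComplex (ModuleCat.{v} R) ℤ where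
  X n := ModuleCat.of R (∀ i, (K i).X n)
  d n m := ModuleCat.ofHom (LinearMap.pi fun i => ((K i).d n m).hom ∘ₗ LinearMap.proj i)
  shape n m h := by
    apply ModuleCat.hom_ext
    apply LinearMap.ext
    intro x
    funext i
    exact congr($((K i).shape n m h).hom (x i))
  d_comp_d' a b c _ _ := by
    apply ModuleCat.hom_ext
    apply LinearMap.ext
    intro x
    funext i
    exact congr($((K i).d_comp_d a b c).hom (x i))

/-- The projection of the product of a sequence of complexes to a factor. -/
def piProj (K : ℕ → CochainComplex (ModuleCat.{v} R) ℤ) (i : ℕ) : piC K ⟶ K i where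
  f _ := ModuleCat.ofHom (LinearMap.proj i)
  comm' _ _ _ := rfl

/-- The morphism to a product of complexes with given components. -/
def piLift {K : ℕ → CochainComplex (ModuleCat.{v} R) ℤ} {W : CochainComplex (ModuleCat.{v} R) ℤ}
    (f : ∀ i, W ⟶ K i) : W ⟶ piC K where
  f n := ModuleCat.ofHom (LinearMap.pi fun i => ((f i).f n).hom)
  comm' n m _ := by
    apply ModuleCat.hom_ext
    apply LinearMap.ext
    intro x
    funext i
    exact congr($((f i).comm n m).hom x)

lemma piLift_proj {K : ℕ → CochainComplex (ModuleCat.{v} R) ℤ}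
    {W : CochainComplex (ModuleCat.{v} R) ℤ}
    (f : ∀ i, W ⟶ K i) (i : ℕ) : piLift f ≫ piProj K i = f i := rfl

/-- The direct sum of a sequence of complexes, with the module of finitely supported
dependent functions in each degree. -/
def sumC (K : ℕ → CochainComplex (ModuleCat.{v} R) ℤ) : CochainComplex (ModuleCat.{v} R) ℤ where
  X n := ModuleCat.of R (Π₀ i, (K i).X n)
  d n m := ModuleCat.ofHom (DFinsupp.mapRange.linearMap fun i => ((K i).d n m).hom)
  shape n m h := by
    apply ModuleCat.hom_ext
    apply LinearMap.ext
    intro x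
    apply DFinsupp.ext
    intro i
    exact congr($((K i).shape n m h).hom (x i))
  d_comp_d' a b c _ _ := by
    apply ModuleCat.hom_ext
    apply LinearMap.ext
    intro x
    apply DFinsupp.ext
    intro i
    exact congr($((K i).d_comp_d a b c).hom (x i))

/-- The projection of a direct sum of complexes to a summand. -/
def sumProj (K : ℕ → CochainComplex (ModuleCat.{v} R) ℤ) (i : ℕ) : sumC K ⟶ K i where
  f n := ModuleCat.ofHom (DFinsupp.lapply (M := fun i => (K i).X n) i)
  comm' _ _ _ := rfl

/-- The inclusion of a summand in a direct sum of complexes. -/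
def sumIncl (K : ℕ → CochainComplex (ModuleCat.{v} R) ℤ) (i : ℕ) : K i ⟶ sumC K where
  f n := ModuleCat.ofHom (DFinsupp.lsingle (M := fun i => (K i).X n) i)
  comm' n m _ := by
    apply ModuleCat.hom_ext
    apply LinearMap.ext
    intro x
    exact DFinsupp.mapRange_single (f := fun i => ((K i).d n m).hom) (hf := by simp)

/-- The morphism from a direct sum of complexes with given components. -/
def sumDesc {K : ℕ → CochainComplex (ModuleCat.{v} R) ℤ} {W : CochainComplex (ModuleCat.{v} R) ℤ}
    (f : ∀ i, K i ⟶ W) : sumC K ⟶ W where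
  f n := ModuleCat.ofHom (DFinsupp.lsum ℕ fun i => ((f i).f n).hom)
  comm' n m _ := by
    apply ModuleCat.hom_ext
    apply DFinsupp.lhom_ext'
    intro i
    apply LinearMap.ext
    intro x
    have h : DFinsupp.mapRange (fun i => ((K i).d n m).hom) (by simp) (DFinsupp.single i x) =
      DFinsupp.single i (((K i).d n m).hom x) :=
      DFinsupp.mapRange_single (f := fun i => ((K i).d n m).hom) (hf := by simp)
    have h' := congr($((f i).comm n m).hom x)
    change (W.d n m).hom (DFinsupp.lsum ℕ (fun i => ((f i).f n).hom) (DFinsupp.single i x)) =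
      DFinsupp.lsum ℕ (fun i => ((f i).f m).hom)
        (DFinsupp.mapRange (fun i => ((K i).d n m).hom) (by simp) (DFinsupp.single i x))
    rw [h, DFinsupp.lsum_single, DFinsupp.lsum_single]
    exact h'

lemma sumIncl_desc {K : ℕ → CochainComplex (ModuleCat.{v} R) ℤ}
    {W : CochainComplex (ModuleCat.{v} R) ℤ}
    (f : ∀ i, K i ⟶ W) (i : ℕ) : sumIncl K i ≫ sumDesc f = f i := by
  ext n : 1
  apply ModuleCat.hom_ext
  apply LinearMap.ext
  intro x
  exact DFinsupp.lsum_single ℕ (fun i => ((f i).f n).hom) i x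

lemma sumIncl_proj_self (K : ℕ → CochainComplex (ModuleCat.{v} R) ℤ) (i : ℕ) :
    sumIncl K i ≫ sumProj K i = 𝟙 _ := by
  ext n : 1
  apply ModuleCat.hom_ext
  apply LinearMap.ext
  intro x
  exact DFinsupp.single_eq_same (β := fun i => (K i).X n)

lemma sumIncl_proj_ne (K : ℕ → CochainComplex (ModuleCat.{v} R) ℤ) {i j : ℕ} (h : i ≠ j) :
    sumIncl K i ≫ sumProj K j = 0 := by
  ext n : 1
  apply ModuleCat.hom_ext
  apply LinearMap.ext
  intro x
  exact DFinsupp.single_eq_of_ne (β := fun i => (K i).X n) h.symm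

lemma sum_hom_ext_f {K : ℕ → CochainComplex (ModuleCat.{v} R) ℤ} {n : ℤ}
    {W : ModuleCat.{v} R} {f g : (sumC K).X n ⟶ W}
    (h : ∀ i, (sumIncl K i).f n ≫ f = (sumIncl K i).f n ≫ g) : f = g := by
  apply ModuleCat.hom_ext
  apply DFinsupp.lhom_ext'
  intro i
  exact congr($(h i).hom)

lemma sum_hom_ext {K : ℕ → CochainComplex (ModuleCat.{v} R) ℤ}
    {W : CochainComplex (ModuleCat.{v} R) ℤ} {f g : sumC K ⟶ W}
    (h : ∀ i, sumIncl K i ≫ f = sumIncl K i ≫ g) : f = g := by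
  ext n : 1
  exact sum_hom_ext_f fun i => congr($(h i).f n)

lemma pi_hom_ext {K : ℕ → CochainComplex (ModuleCat.{v} R) ℤ}
    {W : CochainComplex (ModuleCat.{v} R) ℤ} {f g : W ⟶ piC K}
    (h : ∀ i, f ≫ piProj K i = g ≫ piProj K i) : f = g := by
  ext n : 1
  apply ModuleCat.hom_ext
  apply LinearMap.ext
  intro x
  funext i
  exact congr(($(h i).f n).hom x)

/-! ### Cycles representing homology classes -/

/-- The element `x` of `K.X n` is a cycle and represents the homology class `z`. -/
def Rep (K : CochainComplex (ModuleCat.{v} R) ℤ) (n : ℤ) (x : K.X n) (z : K.homology n) : Prop :=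
  ∃ c : K.cycles n, (K.iCycles n).hom c = x ∧ (K.homologyπ n).hom c = z

variable {K L : CochainComplex (ModuleCat.{v} R) ℤ} {n : ℤ}

lemma Rep.d_eq_zero {x : K.X n} {z : K.homology n} (h : Rep K n x z) (m : ℤ) :
    (K.d n m).hom x = 0 := by
  obtain ⟨c, rfl, -⟩ := h
  exact congr($(K.iCycles_d n m).hom c)

lemma Rep.sub {x y : K.X n} {z t : K.homology n} (h : Rep K n x z) (h' : Rep K n y t) :
    Rep K n (x - y) (z - t) := by
  obtain ⟨c, rfl, rfl⟩ := h
  obtain ⟨c', rfl, rfl⟩ := h'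
  exact ⟨c - c', map_sub _ _ _, map_sub _ _ _⟩

lemma Rep.map {x : K.X n} {z : K.homology n} (h : Rep K n x z) (f : K ⟶ L) :
    Rep L n ((f.f n).hom x) ((HomologicalComplex.homologyMap f n).hom z) := by
  obtain ⟨c, rfl, rfl⟩ := h
  refine ⟨(HomologicalComplex.cyclesMap f n).hom c, ?_, ?_⟩
  · exact congr($(HomologicalComplex.cyclesMap_i f n).hom c)
  · exact congr($(HomologicalComplex.homologyπ_naturality f n).hom c).symm

lemma exists_rep (z : K.homology n) : ∃ x, Rep K n x z := by
  obtain ⟨c, rfl⟩ := (ModuleCat.epi_iff_surjective (K.homologyπ n)).1 inferInstance z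
  exact ⟨_, c, rfl, rfl⟩

lemma exists_rep_of_cycle (x : K.X n) (h : (K.d n (n + 1)).hom x = 0) : ∃ z, Rep K n x z := by
  have hS : (ShortComplex.mk (K.iCycles n) (K.d n (n + 1)) (by simp)).Exact :=
    ShortComplex.exact_of_f_is_kernel _ (K.cyclesIsKernel n (n + 1) (by simp))
  obtain ⟨c, hc⟩ := (ShortComplex.moduleCat_exact_iff _).1 hS x h
  exact ⟨_, c, hc, rfl⟩

lemma rep_zero_iff (x : K.X n) :
    Rep K n x 0 ↔ ∃ w : K.X (n - 1), (K.d (n - 1) n).hom w = x := by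
  constructor
  · rintro ⟨c, rfl, hc⟩
    have hS : (ShortComplex.mk (K.toCycles (n - 1) n) (K.homologyπ n) (by simp)).Exact :=
      ShortComplex.exact_of_g_is_cokernel _ (K.homologyIsCokernel (n - 1) n (by simp))
    obtain ⟨w, hw⟩ := (ShortComplex.moduleCat_exact_iff _).1 hS c hc
    refine ⟨w, ?_⟩
    rw [← K.toCycles_i (n - 1) n, ModuleCat.hom_comp]
    exact congrArg _ hw
  · rintro ⟨w, rfl⟩
    refine ⟨(K.toCycles (n - 1) n).hom w, ?_, ?_⟩
    · exact congr($(K.toCycles_i (n - 1) n).hom w)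
    · exact congr($(K.toCycles_comp_homologyπ (n - 1) n).hom w)

lemma Rep.unique {x : K.X n} {z t : K.homology n} (h : Rep K n x z) (h' : Rep K n x t) :
    z = t := by
  obtain ⟨c, rfl, rfl⟩ := h
  obtain ⟨c', e, rfl⟩ := h'
  rw [(ModuleCat.mono_iff_injective (K.iCycles n)).1 inferInstance e]

lemma rep_zero_zero : Rep K n 0 0 := ⟨0, map_zero _, map_zero _⟩

/-- An endomorphism which is the identity in degree `n` induces the identity on the homology in
degree `n`. -/
lemma homologyMap_eq_id {f : K ⟶ K} (h : f.f n = 𝟙 _) :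
    HomologicalComplex.homologyMap f n = 𝟙 _ := by
  apply ModuleCat.hom_ext
  apply LinearMap.ext
  intro z
  obtain ⟨x, hx⟩ := exists_rep z
  have hfx := hx.map f
  rw [h] at hfx
  exact hfx.unique hx

/-! ### Quasi-isomorphisms of products and direct sums -/

/-- Products of modules are exact: a product of quasi-isomorphisms is a quasi-isomorphism. Both
injectivity and surjectivity on homology are checked by choosing cycles and boundaries factorwise. -/
lemma quasiIso_piLift {K L : ℕ → CochainComplex (ModuleCat.{v} R) ℤ}
    (s : ∀ i, K i ⟶ L i) (hs : ∀ i, QuasiIso (s i)) :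
    QuasiIso (piLift fun i => piProj K i ≫ s i) := by
  have hb (i : ℕ) (n : ℤ) :
      Function.Bijective (HomologicalComplex.homologyMap (s i) n).hom :=
    (ConcreteCategory.isIso_iff_bijective (HomologicalComplex.homologyMap (s i) n)).1 inferInstance
  rw [quasiIso_iff]
  intro n
  rw [quasiIsoAt_iff_isIso_homologyMap, ConcreteCategory.isIso_iff_bijective]
  constructor
  · change Function.Injective
      (HomologicalComplex.homologyMap (piLift fun i => piProj K i ≫ s i) n).hom
    rw [injective_iff_map_eq_zero]
    intro z hz
    obtain ⟨x, hx⟩ := exists_rep z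
    have hx' := hx.map (piLift fun i => piProj K i ≫ s i)
    rw [hz] at hx'
    have key (i : ℕ) : ∃ w : (K i).X (n - 1), ((K i).d (n - 1) n).hom w = x i := by
      rw [← rep_zero_iff]
      have h1 := hx.map (piProj K i)
      have h2 := hx'.map (piProj L i)
      have h3 := h1.map (s i)
      rw [map_zero] at h2
      have h4 := (hb i n).1 ((h3.unique h2).trans (map_zero _).symm)
      rw [h4] at h1
      exact h1
    choose w hw using key
    have : Rep (piC K) n x 0 := (rep_zero_iff x).2 ⟨w, funext hw⟩
    exact hx.unique this
  · intro z
    obtain ⟨y, hy⟩ := exists_rep z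
    have key (i : ℕ) : ∃ (x : (K i).X n) (w : (L i).X (n - 1)),
        ((K i).d n (n + 1)).hom x = 0 ∧ ((L i).d (n - 1) n).hom w = ((s i).f n).hom x - y i := by
      have h1 := hy.map (piProj L i)
      obtain ⟨t, ht⟩ := (hb i n).2 ((HomologicalComplex.homologyMap (piProj L i) n).hom z)
      obtain ⟨x, hx⟩ := exists_rep t
      have h2 := hx.map (s i)
      rw [ht] at h2
      have h3 := h2.sub h1
      rw [sub_self, rep_zero_iff] at h3
      obtain ⟨w, hw⟩ := h3
      exact ⟨x, w, hx.d_eq_zero _, hw⟩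
    choose x w hx hw using key
    obtain ⟨t, ht⟩ := exists_rep_of_cycle (K := piC K) (n := n) x (funext hx)
    refine ⟨t, ?_⟩
    have h1 := (ht.map (piLift fun i => piProj K i ≫ s i)).sub hy
    have h2 := (rep_zero_iff (K := piC L) (n := n) _).2 ⟨w, funext hw⟩
    exact sub_eq_zero.1 (h1.unique h2)

/-- The canonical morphism from the direct sum to the product. -/
def sumToPi (K : ℕ → CochainComplex (ModuleCat.{v} R) ℤ) : sumC K ⟶ piC K :=
  piLift (sumProj K)

/-- If the `i`-th complex vanishes in degrees `> N - i`, then only finitely many complexes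
contribute to a given degree, so the direct sum agrees with the product. -/
lemma isIso_sumToPi (K : ℕ → CochainComplex (ModuleCat.{v} R) ℤ) (N : ℤ)
    (hK : ∀ i : ℕ, (K i).IsStrictlyLE (N - i)) : IsIso (sumToPi K) := by
  have (n : ℤ) : IsIso ((sumToPi K).f n) := by
    rw [ConcreteCategory.isIso_iff_bijective]
    constructor
    · intro x y h
      exact DFinsupp.ext fun i => congrFun h i
    · intro y
      refine ⟨DFinsupp.mk (Finset.range (N - n + 1).toNat) fun i => y i, ?_⟩
      funext i
      by_cases hi : i < (N - n + 1).toNat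
      · change (DFinsupp.mk (β := fun i => (K i).X n) (Finset.range (N - n + 1).toNat)
          fun i => y i) i = y i
        exact DFinsupp.mk_of_mem (β := fun i => (K i).X n) (Finset.mem_range.2 hi)
      · have := ModuleCat.subsingleton_of_isZero ((K i).isZero_of_isStrictlyLE (N - i) n (by omega))
        exact Subsingleton.elim _ _
  exact HomologicalComplex.Hom.isIso_of_components _

/-- Under the degree bounds of `isIso_sumToPi` direct sums are products, so they preserve
quasi-isomorphisms. -/
lemma quasiIso_sumDesc {K L : ℕ → CochainComplex (ModuleCat.{v} R) ℤ} (N : ℤ)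
    (hK : ∀ i : ℕ, (K i).IsStrictlyLE (N - i)) (hL : ∀ i : ℕ, (L i).IsStrictlyLE (N - i))
    (s : ∀ i, K i ⟶ L i) (hs : ∀ i, QuasiIso (s i)) :
    QuasiIso (sumDesc fun i => s i ≫ sumIncl L i) := by
  have := isIso_sumToPi K N hK
  have := isIso_sumToPi L N hL
  have := quasiIso_piLift s hs
  have e : (sumDesc fun i => s i ≫ sumIncl L i) ≫ sumToPi L =
      sumToPi K ≫ piLift fun i => piProj K i ≫ s i := by
    refine sum_hom_ext fun i => pi_hom_ext fun j => ?_
    have h₁ : sumToPi K ≫ piProj K j = sumProj K j := rfl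
    have h₂ : sumToPi L ≫ piProj L j = sumProj L j := rfl
    rw [Category.assoc, Category.assoc, Category.assoc, Category.assoc, h₂, piLift_proj,
      reassoc_of% h₁, ← Category.assoc, sumIncl_desc, Category.assoc, ← Category.assoc (sumIncl K i)]
    by_cases h : i = j
    · subst h
      rw [sumIncl_proj_self, sumIncl_proj_self, Category.comp_id, Category.id_comp]
    · rw [sumIncl_proj_ne _ h, sumIncl_proj_ne _ h, comp_zero, zero_comp]
  rw [(IsIso.eq_comp_inv (sumToPi L)).2 e]
  infer_instance

/-! ### Products and coproducts in the derived category -/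

open DerivedCategory

variable [HasDerivedCategory.{w} (ModuleCat.{v} R)]

/-- The product of complexes is a weak product in the derived category: write the components as left
fractions `Q.map (g i) ≫ inv (Q.map (s i))` and take the product of the denominators. -/
lemma pi_weakLift (K : ℕ → CochainComplex (ModuleCat.{v} R) ℤ)
    (W : DerivedCategory (ModuleCat.{v} R)) (f : ∀ i, W ⟶ Q.obj (K i)) :
    ∃ g : W ⟶ Q.obj (piC K), ∀ i, g ≫ Q.map (piProj K i) = f i := by
  have e := Q.objObjPreimageIso W
  choose L g s hs h using fun i => left_fac (e.hom ≫ f i)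
  have hs' (i : ℕ) : QuasiIso (s i) := (isIso_Q_map_iff_quasiIso (ModuleCat.{v} R) _).1 (hs i)
  have := quasiIso_piLift s hs'
  refine ⟨e.inv ≫ Q.map (piLift g) ≫ inv (Q.map (piLift fun i => piProj K i ≫ s i)), fun i => ?_⟩
  rw [Category.assoc, Iso.inv_comp_eq, h, IsIso.eq_comp_inv, Category.assoc, Category.assoc,
    ← Q.map_comp, ← piLift_proj (fun i => piProj K i ≫ s i) i, Q.map_comp, IsIso.inv_hom_id_assoc,
    ← Q.map_comp, piLift_proj]

/-- The direct sum is a weak product in the derived category, as it is isomorphic to the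
product of complexes. -/
lemma sum_weakLift (K : ℕ → CochainComplex (ModuleCat.{v} R) ℤ) (N : ℤ)
    (hK : ∀ i : ℕ, (K i).IsStrictlyLE (N - i))
    (W : DerivedCategory (ModuleCat.{v} R)) (f : ∀ i, W ⟶ Q.obj (K i)) :
    ∃ g : W ⟶ Q.obj (sumC K), ∀ i, g ≫ Q.map (sumProj K i) = f i := by
  have := isIso_sumToPi K N hK
  obtain ⟨g, hg⟩ := pi_weakLift K W f
  refine ⟨g ≫ Q.map (inv (sumToPi K)), fun i => ?_⟩
  have h : inv (sumToPi K) ≫ sumProj K i = piProj K i := (IsIso.inv_comp_eq _).2 rfl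
  rw [Category.assoc, ← Q.map_comp, h, hg]

/-- The direct sum is a weak coproduct in the derived category: write the components as right
fractions `inv (Q.map (s i)) ≫ Q.map (g i)`. The sources of the `s i` are chosen with the same degree
bounds as the `K i`, so that the direct sum of the `s i` is a quasi-isomorphism. -/
lemma sum_weakDesc (K : ℕ → CochainComplex (ModuleCat.{v} R) ℤ) (N : ℤ)
    (hK : ∀ i : ℕ, (K i).IsStrictlyLE (N - i))
    (W : DerivedCategory (ModuleCat.{v} R)) (f : ∀ i, Q.obj (K i) ⟶ W) :
    ∃ g : Q.obj (sumC K) ⟶ W, ∀ i, Q.map (sumIncl K i) ≫ g = f i := by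
  have e := Q.objObjPreimageIso W
  choose L hL s hs g h using fun i => right_fac_of_isStrictlyLE (f i ≫ e.inv) (N - i)
  have hs' (i : ℕ) : QuasiIso (s i) := (isIso_Q_map_iff_quasiIso (ModuleCat.{v} R) _).1 (hs i)
  have := quasiIso_sumDesc N hL hK s hs'
  refine ⟨inv (Q.map (sumDesc fun i => s i ≫ sumIncl K i)) ≫ Q.map (sumDesc g) ≫ e.hom,
    fun i => ?_⟩
  rw [← Category.assoc, ← Category.assoc, ← Iso.eq_comp_inv, h, IsIso.eq_inv_comp,
    ← Category.assoc, ← Category.assoc, ← Q.map_comp,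
    ← sumIncl_desc (fun i => s i ≫ sumIncl K i) i, Q.map_comp, Category.assoc, Category.assoc,
    IsIso.hom_inv_id_assoc, ← Q.map_comp, sumIncl_desc]

/-- In each degree, the identity of the homology of the direct sum is a finite sum of the maps
induced by projecting to a summand and including it back. -/
lemma exists_homologyMap_eq (K : ℕ → CochainComplex (ModuleCat.{v} R) ℤ) (N : ℤ)
    (hK : ∀ i : ℕ, (K i).IsStrictlyLE (N - i))
    (n : ℤ) : ∃ s : Finset ℕ,
    (homologyFunctor (ModuleCat.{v} R) n).map
      (∑ i ∈ s, Q.map (sumProj K i) ≫ Q.map (sumIncl K i)) = 𝟙 _ := by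
  refine ⟨Finset.range (N - n + 1).toNat, ?_⟩
  simp only [← Q.map_comp, ← Q.map_sum]
  let e := (homologyFunctorFactors (ModuleCat.{v} R) n).app (sumC K)
  refine (cancel_mono e.hom).1 ((homologyFunctorFactors_hom_naturality _ n).trans ?_)
  rw [homologyMap_eq_id]
  · exact (Category.comp_id _).trans (Category.id_comp _).symm
  refine sum_hom_ext_f fun j => ?_
  by_cases hj : j ∈ Finset.range (N - n + 1).toNat
  · rw [← HomologicalComplex.comp_f, Category.comp_id, Preadditive.comp_sum,
      Finset.sum_eq_single_of_mem j hj, ← Category.assoc, sumIncl_proj_self, Category.id_comp]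
    intro i _ hi
    rw [← Category.assoc, sumIncl_proj_ne _ hi.symm, zero_comp]
  · rw [Finset.mem_range] at hj
    exact ((K j).isZero_of_isStrictlyLE (N - j) n (by omega)).eq_of_src _ _

/-- A morphism `f` out of the direct sum in the derived category vanishes if it vanishes on every
summand. Indeed the inclusions of the summands lift to the fibre `h : Z ⟶ Y` of `f`, hence so does
some endomorphism `g ≫ h` of the direct sum `Y` which fixes all inclusions. It induces the identity
on homology, so it is an isomorphism, and `(g ≫ h) ≫ f = 0` forces `f = 0`. -/
lemma sum_derived_hom_ext (K : ℕ → CochainComplex (ModuleCat.{v} R) ℤ) (N : ℤ)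
    (hK : ∀ i : ℕ, (K i).IsStrictlyLE (N - i))
    {W : DerivedCategory (ModuleCat.{v} R)} (f : Q.obj (sumC K) ⟶ W)
    (hf : ∀ i, Q.map (sumIncl K i) ≫ f = 0) : f = 0 := by
  obtain ⟨Z, h, δ, hT⟩ := Pretriangulated.distinguished_cocone_triangle₁ f
  choose l hl using fun i => Pretriangulated.Triangle.coyoneda_exact₂ _ hT _ (hf i)
  obtain ⟨g, hg⟩ := sum_weakDesc K N hK Z l
  have h₁ : (g ≫ h) ≫ f = 0 := by
    have := Pretriangulated.comp_distTriang_mor_zero₁₂ _ hT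
    rw [Category.assoc]
    exact (congrArg (g ≫ ·) this).trans comp_zero
  have h₂ (i : ℕ) : Q.map (sumIncl K i) ≫ g ≫ h = Q.map (sumIncl K i) := by
    rw [← Category.assoc, hg]
    exact (hl i).symm
  have : IsIso (g ≫ h) := by
    rw [DerivedCategory.isIso_iff]
    intro n
    obtain ⟨s, hs⟩ := exists_homologyMap_eq K N hK n
    have h₃ : (∑ i ∈ s, Q.map (sumProj K i) ≫ Q.map (sumIncl K i)) ≫ g ≫ h =
        ∑ i ∈ s, Q.map (sumProj K i) ≫ Q.map (sumIncl K i) := by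
      rw [Preadditive.sum_comp]
      exact Finset.sum_congr rfl fun i _ => by rw [Category.assoc, h₂]
    have h₄ := congrArg (homologyFunctor (ModuleCat.{v} R) n).map h₃
    rw [Functor.map_comp, hs, Category.id_comp] at h₄
    rw [h₄]
    infer_instance
  rw [← cancel_epi (g ≫ h), h₁, comp_zero]


/-- Any family of homology classes of the factors lifts to a homology class of the product. -/
lemma pi_homology_lift (K : ℕ → CochainComplex (ModuleCat.{v} R) ℤ) (n : ℤ)
    (w : ∀ i, (homologyFunctor (ModuleCat.{v} R) n).obj (Q.obj (K i))) :
    ∃ z : (homologyFunctor (ModuleCat.{v} R) n).obj (Q.obj (piC K)),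
      ∀ i, ((homologyFunctor (ModuleCat.{v} R) n).map (Q.map (piProj K i))).hom z = w i := by
  let e (L : CochainComplex (ModuleCat.{v} R) ℤ) :=
    (homologyFunctorFactors (ModuleCat.{v} R) n).app L
  choose x hx using fun i => exists_rep ((e (K i)).hom.hom (w i))
  obtain ⟨t, ht⟩ := exists_rep_of_cycle (K := piC K) (n := n) x
    (funext fun i => (hx i).d_eq_zero _)
  refine ⟨(e _).inv.hom t, fun i => ?_⟩
  have h₁ := (ht.map (piProj K i)).unique (hx i)
  have h₂ :=
    congr($((homologyFunctorFactors (ModuleCat.{v} R) n).inv.naturality (piProj K i)).hom t)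
  refine h₂.symm.trans ((congrArg (e (K i)).inv.hom h₁).trans ?_)
  exact congr($((e (K i)).hom_inv_id).hom (w i))

/-- A homology class of a direct sum has finitely many nonzero components. -/
lemma sum_homology_finite (K : ℕ → CochainComplex (ModuleCat.{v} R) ℤ) (n : ℤ)
    (z : (homologyFunctor (ModuleCat.{v} R) n).obj (Q.obj (sumC K))) :
    ∃ m, ∀ i, m ≤ i →
      ((homologyFunctor (ModuleCat.{v} R) n).map (Q.map (sumProj K i))).hom z = 0 := by
  let e (L : CochainComplex (ModuleCat.{v} R) ℤ) :=
    (homologyFunctorFactors (ModuleCat.{v} R) n).app L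
  obtain ⟨x, hx⟩ := exists_rep ((e _).hom.hom z)
  let x' : Π₀ i, (K i).X n := x
  classical
  obtain ⟨m, hm⟩ := x'.support.bddAbove
  refine ⟨m + 1, fun i hi => ?_⟩
  have h₀ : x' i = 0 := by
    by_contra h
    have := hm (DFinsupp.mem_support_iff.2 h)
    omega
  have h₁ := hx.map (sumProj K i)
  have h₂ : ((sumProj K i).f n).hom x = 0 := h₀
  rw [h₂] at h₁
  have h₃ := h₁.unique rep_zero_zero
  have h₄ :=
    congr($((homologyFunctorFactors (ModuleCat.{v} R) n).hom.naturality (sumProj K i)).hom z)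
  have h₅ := h₄.trans h₃
  apply (ModuleCat.mono_iff_injective (e (K i)).hom).1 inferInstance
  exact h₅.trans (map_zero _).symm

/-- Under an additive equivalence `F`, the homology in degree `n` of `F (K i)` vanishes for large
`i`, provided that `K i` vanishes in degrees `> N - i`. -/
lemma exists_isZero_homology_of_isEquivalence {S : Type} [Ring S]
    [HasDerivedCategory.{w'} (ModuleCat.{v'} S)]
    (F : DerivedCategory (ModuleCat.{v} R) ⥤ DerivedCategory (ModuleCat.{v'} S))
    [F.IsEquivalence] [F.Additive]
    (K : ℕ → CochainComplex (ModuleCat.{v} R) ℤ) (N : ℤ)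
    (hK : ∀ i : ℕ, (K i).IsStrictlyLE (N - i)) (n : ℤ) :
    ∃ m, ∀ i, m ≤ i → IsZero ((homologyFunctor (ModuleCat.{v'} S) n).obj (F.obj (Q.obj (K i)))) := by
  let H := homologyFunctor (ModuleCat.{v'} S) n
  let L (i : ℕ) := Q.objPreimage (F.obj (Q.obj (K i)))
  let e (i : ℕ) : Q.obj (L i) ≅ F.obj (Q.obj (K i)) := Q.objObjPreimageIso _
  let eP := F.objObjPreimageIso (Q.obj (sumC L))
  let eW := F.objObjPreimageIso (Q.obj (piC L))
  -- `F.map a` and `F.map b` are morphisms `F (⨁ K i) ⟶ ⨁ L i` and `∏ L i ⟶ F (⨁ K i)`.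
  obtain ⟨a, ha⟩ := sum_weakDesc K N hK _
    fun i => F.preimage ((e i).inv ≫ Q.map (sumIncl L i) ≫ eP.inv)
  obtain ⟨b, hb⟩ := sum_weakLift K N hK _
    fun i => F.preimage (eW.hom ≫ Q.map (piProj L i) ≫ (e i).hom)
  have hap (i : ℕ) : a ≫ F.preimage (eP.hom ≫ Q.map (sumProj L i) ≫ (e i).hom) =
      Q.map (sumProj K i) := by
    rw [← sub_eq_zero]
    refine sum_derived_hom_ext K N hK _ fun j => ?_
    rw [Preadditive.comp_sub, ← Category.assoc, ha, sub_eq_zero]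
    apply F.map_injective
    rw [← Q.map_comp, F.map_comp, F.map_preimage, F.map_preimage]
    simp only [Category.assoc, Iso.inv_hom_id_assoc]
    rw [← Functor.map_comp_assoc]
    by_cases h : j = i
    · subst h
      rw [sumIncl_proj_self, sumIncl_proj_self]
      simp
    · rw [sumIncl_proj_ne _ h, sumIncl_proj_ne _ h]
      simp
  let c : Q.obj (piC L) ⟶ Q.obj (sumC L) := eW.inv ≫ F.map b ≫ F.map a ≫ eP.hom
  have hc (i : ℕ) : c ≫ Q.map (sumProj L i) = Q.map (piProj L i) := by
    have h₁ := congrArg F.map (hap i)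
    have h₂ := congrArg F.map (hb i)
    rw [F.map_comp, F.map_preimage] at h₁
    rw [F.map_comp, F.map_preimage, ← h₁] at h₂
    rw [← cancel_mono (e i).hom, ← cancel_epi eW.hom]
    simpa [c] using h₂
  -- Choose a class `w i` which is nonzero whenever the module is nonzero.
  have hex (i : ℕ) : ∃ w : H.obj (Q.obj (L i)), w = 0 → IsZero (H.obj (Q.obj (L i))) := by
    by_cases h : ∃ w : H.obj (Q.obj (L i)), w ≠ 0
    · obtain ⟨w, hw⟩ := h
      exact ⟨w, fun h => absurd h hw⟩
    · push Not at h
      have : Subsingleton (H.obj (Q.obj (L i))) := ⟨fun x y => by rw [h x, h y]⟩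
      exact ⟨0, fun _ => ModuleCat.isZero_of_subsingleton _⟩
  choose w hw using hex
  obtain ⟨z, hz⟩ := pi_homology_lift L n w
  obtain ⟨m, hm⟩ := sum_homology_finite L n ((H.map c).hom z)
  refine ⟨m, fun i hi => (hw i ?_).of_iso (H.mapIso (e i).symm)⟩
  rw [← hz i, ← hm i hi, ← hc i]
  exact congr($(H.map_comp c (Q.map (sumProj L i))).hom z)

end BoundedAbove

/-- Let `k` be a field of characteristic zero, `R` and `S` two `k`-algebras,
and `F : D(R) ⥤ D(S)` a `k`-linear triangulated equivalence between the unbounded derived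
categories of left modules. If `X ∈ D(R)` has cohomology bounded above (`H^n(X) = 0` for all
`n ≥ N`), then `F(X)` also has cohomology bounded above. -/
theorem derived_equivalence_preserves_bounded_above
    (k : Type) [Field k] [CharZero k]
    (R S : Type) [Ring R] [Ring S] [Algebra k R] [Algebra k S]
    [HasDerivedCategory (ModuleCat R)] [HasDerivedCategory (ModuleCat S)]
    [CategoryTheory.Linear k (DerivedCategory (ModuleCat R))]
    [CategoryTheory.Linear k (DerivedCategory (ModuleCat S))]
    (F : DerivedCategory (ModuleCat R) ⥤ DerivedCategory (ModuleCat S))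
    [F.IsEquivalence] [F.CommShift ℤ] [F.IsTriangulated] [F.Additive] [F.Linear k]
    (X : DerivedCategory (ModuleCat R)) (N : ℤ)
    (hX : ∀ n : ℤ, N ≤ n → IsZero ((DerivedCategory.homologyFunctor (ModuleCat R) n).obj X)) :
    ∃ M : ℤ, ∀ n : ℤ, M ≤ n →
      IsZero ((DerivedCategory.homologyFunctor (ModuleCat S) n).obj (F.obj X)) := by
  have : X.IsLE N := (DerivedCategory.isLE_iff X N).2 fun i hi => hX i hi.le
  obtain ⟨K, hK, ⟨e⟩⟩ := DerivedCategory.exists_iso_Q_obj_of_isLE X N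
  obtain ⟨m, hm⟩ := BoundedAbove.exists_isZero_homology_of_isEquivalence F
    (fun i : ℕ => K⟦(i : ℤ)⟧) N
    (fun i => K.isStrictlyLE_shift N i (N - i) (by omega)) 0
  refine ⟨m, fun n hn => ?_⟩
  obtain ⟨i, rfl⟩ := Int.eq_ofNat_of_zero_le (show 0 ≤ n by omega)
  refine (hm i (by omega)).of_iso ?_
  let H := DerivedCategory.homologyFunctor (ModuleCat S) 0
  let e' : (F.obj X)⟦(i : ℤ)⟧ ≅ F.obj (DerivedCategory.Q.obj (K⟦(i : ℤ)⟧)) :=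
    ((F.commShiftIso (i : ℤ)).app X).symm ≪≫
      F.mapIso ((shiftFunctor _ (i : ℤ)).mapIso e ≪≫
        ((DerivedCategory.Q.commShiftIso (i : ℤ)).app K).symm)
  exact ((H.isoShift (i : ℤ)).app (F.obj X)).symm ≪≫ H.mapIso e'
end

section
/- Let R and S be k-algebras and let F : D(R) → D(S) be a k-linear triangulated equivalence between their unbounded derived categories. If X is an object of D(R) whose cohomology is bounded (i.e. H^n(X) = 0 for all but finitely many integers n), then the cohomology of F(X) is also bounded (H^n(F(X)) = 0 for all but finitely many integers n). (This is the content of the statement that any triangulated equivalence between D^-(R) and D^-(S) restricts to an equivalence between D^b(R) and D^b(S).) -/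
/-!
If `X` has bounded cohomology, each cohomology group of `⨁ₙ X[n]` and of `∏ₙ X[n]` (over all
integers `n`) involves only finitely many terms, so the two objects agree in `D(R)`: one object is
at once the coproduct and the product of the `X[n]`. An equivalence `F` preserves this situation,
so the coproduct and the product of the `F(X)[n]` agree in `D(S)`. Taking `H^0`, which commutes
with both, the canonical map `⨁ₙ H^n(F X) ⟶ ∏ₙ H^n(F X)` is invertible, and this forces almost
all `H^n(F X)` to vanish. Compactness or perfectness of complexes is not needed.

In `D(R)` the universal properties are proved with the calculus of fractions, using exactness of
products and coproducts of modules: `coprodCx.exists_desc` and `coprodCx.Q_hom_ext` give the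
coproduct property of the degreewise coproduct of complexes, and `prodCx.exists_lift` the lifting
property of the product. Since `X` is represented by a strictly bounded complex, the degreewise
coproduct and product of its shifts are isomorphic complexes (`isIso_coprodCx_to_prodCx`).
In `D(S)` only a weak consequence is used: a map `∏ L n ⟶ ⨁ L n` compatible with the projections
(`exists_prod_to_coprod`), where `L n` represents `F(X)[n]`. An element of a direct sum has finite
support, so such a map allows only finitely many nonzero `H^0(L n)` (`finite_of_homology_map`).
-/

open CategoryTheory CategoryTheory.Limits

namespace DerivedBounded

open DerivedCategory

universe w w' v v' u u'

section Families

variable {C : Type u} [Category.{v} C] [Abelian C] {ι : Type}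

/-- A family of cochain complexes, viewed as one cochain complex in the functor category
`Discrete ι ⥤ C`. -/
noncomputable def familyComplex (K : ι → CochainComplex C ℤ) :
    CochainComplex (Discrete ι ⥤ C) ℤ where
  X i := Discrete.functor fun j => (K j).X i
  d i i' := Discrete.natTrans fun j => (K j.as).d i i'
  shape i i' h := by
    ext j
    exact (K j.as).shape i i' h
  d_comp_d' i j k _ _ := by
    ext l
    simp

/-- A family of chain maps, viewed as one map of complexes in `Discrete ι ⥤ C`. -/
noncomputable def familyMap {K L : ι → CochainComplex C ℤ} (f : ∀ j, K j ⟶ L j) :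
    familyComplex K ⟶ familyComplex L where
  f i := Discrete.natTrans fun j => (f j.as).f i
  comm' i i' _ := by
    ext j
    simp [familyComplex]

lemma quasiIso_familyMap {K L : ι → CochainComplex C ℤ} (f : ∀ j, K j ⟶ L j)
    (hf : ∀ j, QuasiIso (f j)) : QuasiIso (familyMap f) := by
  rw [HomologicalComplex.quasiIso_iff_evaluation]
  intro j
  exact hf j.as

/-! ### Coproducts of complexes and of their images in the derived category -/

section Coproducts

variable [HasColimitsOfShape (Discrete ι) C]

instance colim_additive : (colim : (Discrete ι ⥤ C) ⥤ C).Additive where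
  map_add {X Y f g} := by
    apply colimit.hom_ext
    intro j
    simp

/-- The degreewise coproduct of a family of cochain complexes. It is obtained by applying the
additive functor `colim` to `familyComplex K`, so that exactness of `colim` makes it preserve
quasi-isomorphisms. -/
noncomputable def coprodCx (K : ι → CochainComplex C ℤ) : CochainComplex C ℤ :=
  ((colim : (Discrete ι ⥤ C) ⥤ C).mapHomologicalComplex _).obj (familyComplex K)

namespace coprodCx

/-- The inclusion of a summand in the coproduct of complexes. -/
noncomputable def incl (K : ι → CochainComplex C ℤ) (j : ι) : K j ⟶ coprodCx K where
  f i := colimit.ι (Discrete.functor fun j => (K j).X i) ⟨j⟩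
  comm' _ _ _ := colimit.ι_desc _ _

/-- The coproduct of a family of chain maps. -/
noncomputable def map {K L : ι → CochainComplex C ℤ} (f : ∀ j, K j ⟶ L j) :
    coprodCx K ⟶ coprodCx L :=
  ((colim : (Discrete ι ⥤ C) ⥤ C).mapHomologicalComplex _).map (familyMap f)

lemma X_ext {K : ι → CochainComplex C ℤ} {i : ℤ} {Z : C} {f g : (coprodCx K).X i ⟶ Z}
    (h : ∀ j, (incl K j).f i ≫ f = (incl K j).f i ≫ g) : f = g :=
  colimit.hom_ext fun ⟨j⟩ => h j

/-- The map out of a term of the coproduct with prescribed components. -/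
noncomputable def descX {K : ι → CochainComplex C ℤ} {i : ℤ} {Z : C}
    (f : ∀ j, (K j).X i ⟶ Z) : (coprodCx K).X i ⟶ Z :=
  Sigma.desc f

@[simp]
lemma incl_descX {K : ι → CochainComplex C ℤ} {i : ℤ} {Z : C}
    (f : ∀ j, (K j).X i ⟶ Z) (j : ι) : (incl K j).f i ≫ descX f = f j :=
  Sigma.ι_desc _ _

@[simp]
lemma incl_descX_assoc {K : ι → CochainComplex C ℤ} {i : ℤ} {Z Z' : C}
    (f : ∀ j, (K j).X i ⟶ Z) (j : ι) (g : Z ⟶ Z') :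
    (incl K j).f i ≫ descX f ≫ g = f j ≫ g := by
  rw [← Category.assoc, incl_descX]

/-- The chain map out of the coproduct with prescribed components. -/
noncomputable def desc {K : ι → CochainComplex C ℤ} {Z : CochainComplex C ℤ}
    (f : ∀ j, K j ⟶ Z) : coprodCx K ⟶ Z where
  f i := descX fun j => (f j).f i
  comm' i i' _ := by
    apply X_ext
    intro j
    rw [incl_descX_assoc, HomologicalComplex.Hom.comm_assoc, incl_descX,
      HomologicalComplex.Hom.comm]

@[simp]
lemma incl_desc {K : ι → CochainComplex C ℤ} {Z : CochainComplex C ℤ}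
    (f : ∀ j, K j ⟶ Z) (j : ι) : incl K j ≫ desc f = f j := by
  ext i
  exact incl_descX _ j

@[simp]
lemma incl_map {K L : ι → CochainComplex C ℤ} (f : ∀ j, K j ⟶ L j) (j : ι) :
    incl K j ≫ map f = f j ≫ incl L j := by
  ext i
  exact colimit.ι_desc _ _

open Classical in
/-- The projection of the coproduct of complexes onto one of its summands. -/
noncomputable def proj (K : ι → CochainComplex C ℤ) (j : ι) : coprodCx K ⟶ K j :=
  desc fun j' => if h : j' = j then eqToHom (by rw [h]) else 0

@[simp]
lemma incl_proj_self (K : ι → CochainComplex C ℤ) (j : ι) : incl K j ≫ proj K j = 𝟙 _ := by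
  simp [proj]

lemma incl_proj_ne (K : ι → CochainComplex C ℤ) {j j' : ι} (h : j' ≠ j) :
    incl K j' ≫ proj K j = 0 := by
  simp [proj, h]

/-- Homotopies assemble over a coproduct. -/
noncomputable def homotopyZero {K : ι → CochainComplex C ℤ} {Z : CochainComplex C ℤ}
    (f : coprodCx K ⟶ Z) (h : ∀ j, Homotopy (incl K j ≫ f) 0) : Homotopy f 0 where
  hom i i' := descX fun j => (h j).hom i i'
  zero i i' hi := by
    apply X_ext
    intro j
    rw [incl_descX, (h j).zero i i' hi, comp_zero]
  comm i := by
    apply X_ext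
    intro j
    have := (h j).comm i
    simp only [HomologicalComplex.comp_f, HomologicalComplex.zero_f, add_zero] at this ⊢
    rw [this, Preadditive.comp_add]
    congr 1
    · simp [dNext, HomologicalComplex.Hom.comm_assoc]
    · simp [prevD]

variable [HasExactColimitsOfShape (Discrete ι) C]

lemma quasiIso_map {K L : ι → CochainComplex C ℤ} (f : ∀ j, K j ⟶ L j)
    (hf : ∀ j, QuasiIso (f j)) : QuasiIso (map f) := by
  have := quasiIso_familyMap f hf
  have : (colim : (Discrete ι ⥤ C) ⥤ C).PreservesHomology := inferInstance
  exact HomologicalComplex.quasiIso_map_of_preservesHomology (familyMap f) _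

variable [HasDerivedCategory.{w} C]

/-- Existence half of the universal property of `⨁ K j` as a coproduct in the derived category:
each component is a right fraction, and the denominators assemble to a quasi-isomorphism. -/
lemma exists_desc (K : ι → CochainComplex C ℤ) (Z : DerivedCategory C)
    (f : ∀ j, Q.obj (K j) ⟶ Z) :
    ∃ a : Q.obj (coprodCx K) ⟶ Z, ∀ j, Q.map (incl K j) ≫ a = f j := by
  let e := Q.objObjPreimageIso Z
  choose X' s hs g hg using fun j => right_fac (f j ≫ e.inv)
  have : IsIso (Q.map (map s)) := by
    rw [isIso_Q_map_iff_quasiIso]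
    exact quasiIso_map s fun j => (isIso_Q_map_iff_quasiIso _ _).1 (hs j)
  refine ⟨inv (Q.map (map s)) ≫ Q.map (desc g) ≫ e.hom, fun j => ?_⟩
  rw [← cancel_mono e.inv, hg]
  have := hs j
  rw [← cancel_epi (Q.map (s j))]
  simp only [Category.assoc, Iso.hom_inv_id, Category.comp_id, IsIso.hom_inv_id_assoc]
  rw [← Q.map_comp_assoc, ← incl_map, Q.map_comp_assoc, IsIso.hom_inv_id_assoc, ← Q.map_comp,
    incl_desc]

/-- A chain map killed by `Q` becomes null-homotopic after precomposition with some
quasi-isomorphism. -/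
lemma exists_homotopy_of_Q_map_eq_zero {K Z : CochainComplex C ℤ} (g : K ⟶ Z)
    (hg : Q.map g = 0) :
    ∃ (X : CochainComplex C ℤ) (s : X ⟶ K) (_ : IsIso (Q.map s)),
      Nonempty (Homotopy (s ≫ g) 0) := by
  have h0 : Qh.map ((HomotopyCategory.quotient C (.up ℤ)).map g) = Qh.map 0 := by
    rw [Functor.map_zero]
    exact hg
  obtain ⟨X, s, hs, h⟩ := (MorphismProperty.map_eq_iff_precomp Qh
    (HomotopyCategory.quasiIso C (.up ℤ)) _ _).1 h0
  obtain ⟨X, rfl⟩ := HomotopyCategory.quotient_obj_surjective X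
  obtain ⟨s, rfl⟩ := (HomotopyCategory.quotient _ _).map_surjective s
  rw [← isIso_Qh_map_iff] at hs
  rw [comp_zero, ← Functor.map_comp, HomotopyCategory.quotient_map_eq_zero_iff] at h
  exact ⟨X, s, hs, h⟩

/-- Uniqueness half of the universal property of `⨁ K j` as a coproduct in the derived
category. -/
lemma Q_hom_ext (K : ι → CochainComplex C ℤ) {Z : DerivedCategory C}
    (f g : Q.obj (coprodCx K) ⟶ Z)
    (h : ∀ j, Q.map (incl K j) ≫ f = Q.map (incl K j) ≫ g) : f = g := by
  rw [← sub_eq_zero]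
  have hd : ∀ j, Q.map (incl K j) ≫ (f - g) = 0 := fun j => by
    rw [Preadditive.comp_sub, h, sub_self]
  generalize f - g = d at hd
  let e := Q.objObjPreimageIso Z
  obtain ⟨Z', p, s, hs, hp⟩ := left_fac (d ≫ e.inv)
  have hp0 : ∀ j, Q.map (incl K j ≫ p) = 0 := fun j => by
    rw [← cancel_mono (inv (Q.map s)), Q.map_comp, Category.assoc, ← hp, reassoc_of% hd j]
    simp
  choose X t ht hX using fun j => exists_homotopy_of_Q_map_eq_zero _ (hp0 j)
  have : IsIso (Q.map (map t)) := by
    rw [isIso_Q_map_iff_quasiIso]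
    exact quasiIso_map t fun j => (isIso_Q_map_iff_quasiIso _ _).1 (ht j)
  have H : Homotopy (map t ≫ p) 0 := homotopyZero _ fun j =>
    (Homotopy.ofEq (by rw [← Category.assoc, incl_map, Category.assoc])).trans (hX j).some
  have hQ : Q.map (map t) ≫ Q.map p = 0 := by
    rw [← Q.map_comp, Q_map_eq_of_homotopy C H, Functor.map_zero]
  have hQp : Q.map p = 0 := by
    rw [← cancel_epi (Q.map (map t)), hQ, comp_zero]
  rw [← cancel_mono e.inv, hp, hQp]
  simp

end coprodCx

end Coproducts

/-! ### Products of complexes -/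

section Products

variable [HasLimitsOfShape (Discrete ι) C]

instance lim_additive : (lim : (Discrete ι ⥤ C) ⥤ C).Additive where
  map_add {X Y f g} := by
    apply limit.hom_ext
    intro j
    simp

/-- The degreewise product of a family of cochain complexes. -/
noncomputable def prodCx (K : ι → CochainComplex C ℤ) : CochainComplex C ℤ :=
  ((lim : (Discrete ι ⥤ C) ⥤ C).mapHomologicalComplex _).obj (familyComplex K)

namespace prodCx

/-- The projection from the product of complexes to a factor. -/
noncomputable def proj (K : ι → CochainComplex C ℤ) (j : ι) : prodCx K ⟶ K j where
  f i := limit.π (Discrete.functor fun j => (K j).X i) ⟨j⟩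
  comm' i i' _ := (limMap_π ((familyComplex K).d i i') ⟨j⟩).symm

/-- The product of a family of chain maps. -/
noncomputable def map {K L : ι → CochainComplex C ℤ} (f : ∀ j, K j ⟶ L j) :
    prodCx K ⟶ prodCx L :=
  ((lim : (Discrete ι ⥤ C) ⥤ C).mapHomologicalComplex _).map (familyMap f)

lemma X_ext {K : ι → CochainComplex C ℤ} {i : ℤ} {Z : C} {f g : Z ⟶ (prodCx K).X i}
    (h : ∀ j, f ≫ (proj K j).f i = g ≫ (proj K j).f i) : f = g :=
  limit.hom_ext fun ⟨j⟩ => h j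

/-- The map into a term of the product with prescribed components. -/
noncomputable def liftX {K : ι → CochainComplex C ℤ} {i : ℤ} {Z : C}
    (f : ∀ j, Z ⟶ (K j).X i) : Z ⟶ (prodCx K).X i :=
  Pi.lift f

@[simp]
lemma liftX_proj {K : ι → CochainComplex C ℤ} {i : ℤ} {Z : C}
    (f : ∀ j, Z ⟶ (K j).X i) (j : ι) : liftX f ≫ (proj K j).f i = f j :=
  Pi.lift_π _ _

/-- The chain map into the product with prescribed components. -/
noncomputable def lift {K : ι → CochainComplex C ℤ} {Z : CochainComplex C ℤ}
    (f : ∀ j, Z ⟶ K j) : Z ⟶ prodCx K where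
  f i := liftX fun j => (f j).f i
  comm' i i' _ := by
    apply X_ext
    intro j
    rw [Category.assoc, Category.assoc, liftX_proj, ← HomologicalComplex.Hom.comm,
      ← HomologicalComplex.Hom.comm, ← Category.assoc, liftX_proj]

@[simp]
lemma lift_proj {K : ι → CochainComplex C ℤ} {Z : CochainComplex C ℤ}
    (f : ∀ j, Z ⟶ K j) (j : ι) : lift f ≫ proj K j = f j := by
  ext i
  exact liftX_proj _ j

@[simp]
lemma map_proj {K L : ι → CochainComplex C ℤ} (f : ∀ j, K j ⟶ L j) (j : ι) :
    map f ≫ proj L j = proj K j ≫ f j := by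
  ext i
  exact limMap_π _ _

variable [HasExactLimitsOfShape (Discrete ι) C]

lemma quasiIso_map {K L : ι → CochainComplex C ℤ} (f : ∀ j, K j ⟶ L j)
    (hf : ∀ j, QuasiIso (f j)) : QuasiIso (map f) := by
  have := quasiIso_familyMap f hf
  have : (lim : (Discrete ι ⥤ C) ⥤ C).PreservesHomology := inferInstance
  exact HomologicalComplex.quasiIso_map_of_preservesHomology (familyMap f) _

variable [HasDerivedCategory.{w} C]

/-- Existence half of the universal property of `∏ K j` as a product in the derived category:
each component is a left fraction, and the denominators assemble to a quasi-isomorphism. -/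
lemma exists_lift (K : ι → CochainComplex C ℤ) (Z : DerivedCategory C)
    (f : ∀ j, Z ⟶ Q.obj (K j)) :
    ∃ a : Z ⟶ Q.obj (prodCx K), ∀ j, a ≫ Q.map (proj K j) = f j := by
  let e := Q.objObjPreimageIso Z
  choose Y' g s hs hg using fun j => left_fac (e.hom ≫ f j)
  have : IsIso (Q.map (map s)) := by
    rw [isIso_Q_map_iff_quasiIso]
    exact quasiIso_map s fun j => (isIso_Q_map_iff_quasiIso _ _).1 (hs j)
  refine ⟨e.inv ≫ Q.map (lift g) ≫ inv (Q.map (map s)), fun j => ?_⟩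
  rw [← cancel_epi e.hom, hg]
  have := hs j
  rw [← cancel_mono (Q.map (s j))]
  simp only [Category.assoc, Iso.hom_inv_id_assoc, Category.comp_id, IsIso.inv_hom_id]
  rw [← Q.map_comp, ← map_proj, Q.map_comp, IsIso.inv_hom_id_assoc, ← Q.map_comp,
    lift_proj]

end prodCx

end Products

/-! ### Locally finite families -/

section LocallyFinite

variable [HasColimitsOfShape (Discrete ι) C] [HasLimitsOfShape (Discrete ι) C]

/-- If only finitely many `K j` are nonzero in each degree, then `⨁ K j ⟶ ∏ K j` is an
isomorphism: degreewise, the inverse is the finite sum of the maps `∏ K j ⟶ K j ⟶ ⨁ K j`. -/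
lemma isIso_coprodCx_to_prodCx (K : ι → CochainComplex C ℤ)
    (hK : ∀ i, {j | ¬ IsZero ((K j).X i)}.Finite) :
    IsIso (prodCx.lift fun j => coprodCx.proj K j) := by
  have key : ∀ i, IsIso ((prodCx.lift fun j => coprodCx.proj K j).f i) := by
    intro i
    have hl : ∀ j, (prodCx.lift fun j => coprodCx.proj K j).f i ≫ (prodCx.proj K j).f i =
        (coprodCx.proj K j).f i := fun j => prodCx.liftX_proj _ j
    have hself : ∀ j, (coprodCx.incl K j).f i ≫ (coprodCx.proj K j).f i = 𝟙 _ := fun j => by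
      rw [← HomologicalComplex.comp_f, coprodCx.incl_proj_self, HomologicalComplex.id_f]
    have hne : ∀ j j', j' ≠ j → (coprodCx.incl K j').f i ≫ (coprodCx.proj K j).f i = 0 :=
      fun j j' h => by
        rw [← HomologicalComplex.comp_f, coprodCx.incl_proj_ne K h, HomologicalComplex.zero_f]
    refine ⟨∑ j ∈ (hK i).toFinset, (prodCx.proj K j).f i ≫ (coprodCx.incl K j).f i, ?_, ?_⟩
    · apply coprodCx.X_ext
      intro j
      by_cases hj : IsZero ((K j).X i)
      · exact hj.eq_of_src _ _
      simp only [Preadditive.comp_sum, reassoc_of% hl]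
      rw [Finset.sum_eq_single j]
      · rw [reassoc_of% hself, Category.comp_id]
      · intro j' _ h
        rw [reassoc_of% hne _ _ h.symm, zero_comp]
      · intro h
        simp [hj] at h
    · apply prodCx.X_ext
      intro j
      by_cases hj : IsZero ((K j).X i)
      · exact hj.eq_of_tgt _ _
      simp only [Preadditive.sum_comp, Category.assoc, hl]
      rw [Finset.sum_eq_single j]
      · rw [hself, Category.comp_id, Category.id_comp]
      · intro j' _ h
        rw [hne _ _ h, comp_zero]
      · intro h
        simp [hj] at h
  exact HomologicalComplex.Hom.isIso_of_components _

/-- For a locally finite family, `⨁ K j` also has the lifting property of a product in the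
derived category. -/
lemma coprodCx_exists_lift [HasExactLimitsOfShape (Discrete ι) C] [HasDerivedCategory.{w} C]
    (K : ι → CochainComplex C ℤ) (hK : ∀ i, {j | ¬ IsZero ((K j).X i)}.Finite)
    (Z : DerivedCategory C) (f : ∀ j, Z ⟶ Q.obj (K j)) :
    ∃ a : Z ⟶ Q.obj (coprodCx K), ∀ j, a ≫ Q.map (coprodCx.proj K j) = f j := by
  obtain ⟨a, ha⟩ := prodCx.exists_lift K Z f
  have := isIso_coprodCx_to_prodCx K hK
  refine ⟨a ≫ Q.map (inv (prodCx.lift fun j => coprodCx.proj K j)), fun j => ?_⟩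
  have h : inv (prodCx.lift fun j => coprodCx.proj K j) ≫ coprodCx.proj K j =
      prodCx.proj K j := by
    rw [IsIso.inv_comp_eq, prodCx.lift_proj]
  rw [Category.assoc, ← Q.map_comp, h, ha]

end LocallyFinite

/-- An equivalence carries `⨁ K j`, which is both the product and the coproduct of the `K j`, to
an object of the same kind; comparing it with `∏ L j` and `⨁ L j` for complexes `L j`
representing `F (K j)` produces a map `∏ L j ⟶ ⨁ L j` compatible with all the projections. -/
lemma exists_prod_to_coprod {D : Type u'} [Category.{v'} D] [Abelian D]
    [HasDerivedCategory.{w} C] [HasDerivedCategory.{w'} D]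
    [HasColimitsOfShape (Discrete ι) C] [HasLimitsOfShape (Discrete ι) C]
    [HasExactColimitsOfShape (Discrete ι) C] [HasExactLimitsOfShape (Discrete ι) C]
    [HasColimitsOfShape (Discrete ι) D] [HasLimitsOfShape (Discrete ι) D]
    (F : DerivedCategory C ⥤ DerivedCategory D) [F.IsEquivalence]
    (K : ι → CochainComplex C ℤ) (hK : ∀ i, {j | ¬ IsZero ((K j).X i)}.Finite)
    (L : ι → CochainComplex D ℤ) (e : ∀ j, F.obj (Q.obj (K j)) ≅ Q.obj (L j)) :
    ∃ ψ : Q.obj (prodCx L) ⟶ Q.obj (coprodCx L),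
      ∀ j, ψ ≫ Q.map (coprodCx.proj L j) = Q.map (prodCx.proj L j) := by
  let P := Q.obj (prodCx L)
  let T := Q.obj (coprodCx L)
  let p : F.obj (F.objPreimage P) ≅ P := F.objObjPreimageIso P
  let t : F.obj (F.objPreimage T) ≅ T := F.objObjPreimageIso T
  obtain ⟨a, ha⟩ := coprodCx_exists_lift K hK (F.objPreimage P)
    fun j => F.preimage (p.hom ≫ Q.map (prodCx.proj L j) ≫ (e j).inv)
  obtain ⟨b, hb⟩ := coprodCx.exists_desc K (F.objPreimage T)
    fun j => F.preimage ((e j).hom ≫ Q.map (coprodCx.incl L j) ≫ t.inv)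
  have hbp : ∀ j, F.map b ≫ t.hom ≫ Q.map (coprodCx.proj L j) ≫ (e j).inv =
      F.map (Q.map (coprodCx.proj K j)) := by
    intro j
    rw [← F.map_preimage (F.map b ≫ t.hom ≫ Q.map (coprodCx.proj L j) ≫ (e j).inv)]
    congr 1
    apply coprodCx.Q_hom_ext
    intro j'
    apply F.map_injective
    rw [F.map_comp, F.map_preimage, ← F.map_comp_assoc, hb, F.map_preimage, ← Q.map_comp]
    simp only [Category.assoc, Iso.inv_hom_id_assoc]
    rw [← Q.map_comp_assoc]
    by_cases h : j' = j
    · subst h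
      simp
    · simp [coprodCx.incl_proj_ne _ h]
  refine ⟨p.inv ≫ F.map a ≫ F.map b ≫ t.hom, fun j => ?_⟩
  rw [← cancel_mono (e j).inv]
  simp only [Category.assoc]
  rw [hbp, ← F.map_comp, ha, F.map_preimage, Iso.inv_hom_id_assoc]

end Families

/-! ### Modules -/

section Modules

instance hasCoproductsOfShape (R : Type) [Ring R] (ι : Type) :
    HasColimitsOfShape (Discrete ι) (ModuleCat.{v} R) := by
  have : HasColimitsOfSize.{0, 0} (ModuleCat.{v} R) := hasColimitsOfSizeShrink.{0, 0, v, v} _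
  infer_instance

instance hasProductsOfShape (R : Type) [Ring R] (ι : Type) :
    HasLimitsOfShape (Discrete ι) (ModuleCat.{v} R) := by
  have : HasLimitsOfSize.{0, 0} (ModuleCat.{v} R) := hasLimitsOfSizeShrink.{0, 0, v, v} _
  infer_instance

instance hasExactCoproducts (R : Type) [Ring R] (ι : Type) :
    HasExactColimitsOfShape (Discrete ι) (ModuleCat.{v} R) := by
  have : HasColimitsOfSize.{0, 0} AddCommGrpCat.{v} := hasColimitsOfSizeShrink.{0, 0, v, v} _
  have := AB4OfSize_shrink.{0, v} AddCommGrpCat.{v}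
  exact HasExactColimitsOfShape.domain_of_functor (Discrete ι)
    (forget₂ (ModuleCat.{v} R) AddCommGrpCat.{v})

instance hasExactProducts (R : Type) [Ring R] (ι : Type) :
    HasExactLimitsOfShape (Discrete ι) (ModuleCat.{v} R) := by
  have := AB4StarOfSize_shrink.{0, v} AddCommGrpCat.{v}
  exact HasExactLimitsOfShape.domain_of_functor (Discrete ι)
    (forget₂ (ModuleCat.{v} R) AddCommGrpCat.{v})

variable {S : Type} [Ring S] {ι : Type}

/-- An element of a direct sum of modules has finitely many nonzero components. The elements with
this property form a submodule containing all the summands. -/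
lemma finite_support (L : ι → CochainComplex (ModuleCat.{v} S) ℤ) (i : ℤ)
    (x : (coprodCx L).X i) : {j | (coprodCx.proj L j).f i x ≠ 0}.Finite := by
  let W : Submodule S ((coprodCx L).X i) :=
    { carrier := {x | {j | (coprodCx.proj L j).f i x ≠ 0}.Finite}
      zero_mem' := by simp
      add_mem' := by
        intro a b ha hb
        refine (ha.union hb).subset fun j hj => ?_
        by_contra h
        simp only [Set.mem_union, Set.mem_ofPred_eq, not_or, not_not] at h
        exact hj (by rw [map_add, h.1, h.2, add_zero])
      smul_mem' := by
        intro c a ha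
        refine Set.Finite.subset ha fun j hj h => hj ?_
        rw [map_smul, h, smul_zero] }
  have hq : ModuleCat.ofHom W.mkQ = 0 := by
    apply coprodCx.X_ext
    intro j
    ext y
    have : (coprodCx.incl L j).f i y ∈ W := by
      refine (Set.finite_singleton j).subset fun j' hj' => ?_
      by_contra h
      apply hj'
      rw [← ConcreteCategory.comp_apply, ← HomologicalComplex.comp_f,
        coprodCx.incl_proj_ne L (Ne.symm h)]
      rfl
    simpa using this
  have hx : ModuleCat.ofHom W.mkQ x = 0 := by
    rw [hq]
    rfl
  have hxW : x ∈ W := by simpa using hx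
  exact hxW

/-- If there is a map `H^0 (∏ L j) ⟶ H^0 (⨁ L j)` compatible with the projections, then only
finitely many of the `H^0 (L j)` are nonzero: the image of a class with a nonzero component for each nonzero
`H^0 (L j)` is represented by a cocycle in a direct sum, which has finite support. -/
lemma finite_of_homology_map (L : ι → CochainComplex (ModuleCat.{v} S) ℤ)
    (h : (prodCx L).homology 0 ⟶ (coprodCx L).homology 0)
    (hh : ∀ j, h ≫ HomologicalComplex.homologyMap (coprodCx.proj L j) 0 =
      HomologicalComplex.homologyMap (prodCx.proj L j) 0) :
    {j | ¬ IsZero ((L j).homology 0)}.Finite := by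
  have hz : ∀ j, ∃ z : (L j).cycles 0, ¬ IsZero ((L j).homology 0) →
      (L j).homologyπ 0 z ≠ 0 := by
    intro j
    by_contra! H
    refine (H 0).1 ((IsZero.iff_id_eq_zero _).2 ?_)
    rw [← cancel_epi ((L j).homologyπ 0)]
    ext z
    simpa using (H z).2
  choose z hz using hz
  -- The elements `z j` as maps from the free module of rank one.
  let A : ModuleCat.{v} S := ModuleCat.of S (ULift.{v} S)
  let ζ : ∀ j, A ⟶ (L j).cycles 0 := fun j =>
    ModuleCat.ofHom ((LinearMap.toSpanSingleton S _ (z j)).comp ULift.moduleEquiv.toLinearMap)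
  have hζ : ∀ j, ζ j ⟨1⟩ = z j := fun j => one_smul S (z j)
  let Z : A ⟶ (prodCx L).cycles 0 :=
    (prodCx L).liftCycles (prodCx.liftX fun j => ζ j ≫ (L j).iCycles 0) 1 (by simp) (by
      apply prodCx.X_ext
      intro j
      rw [Category.assoc, ← HomologicalComplex.Hom.comm, ← Category.assoc, prodCx.liftX_proj]
      simp)
  have hZ : ∀ j, Z ≫ HomologicalComplex.cyclesMap (prodCx.proj L j) 0 = ζ j := fun j => by
    rw [← cancel_mono ((L j).iCycles 0)]
    simp [Z]
  let y : (coprodCx L).homology 0 := h ((prodCx L).homologyπ 0 (Z ⟨1⟩))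
  have hy : ∀ j, HomologicalComplex.homologyMap (coprodCx.proj L j) 0 y =
      (L j).homologyπ 0 (z j) := fun j => by
    have : (Z ≫ (prodCx L).homologyπ 0 ≫ h) ≫
        HomologicalComplex.homologyMap (coprodCx.proj L j) 0 = ζ j ≫ (L j).homologyπ 0 := by
      rw [Category.assoc, Category.assoc, hh, HomologicalComplex.homologyπ_naturality,
        reassoc_of% hZ]
    rw [← hζ]
    exact ConcreteCategory.congr_hom this (⟨1⟩ : A)
  obtain ⟨c, hc⟩ := (ModuleCat.epi_iff_surjective ((coprodCx L).homologyπ 0)).1 inferInstance y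
  refine (finite_support L 0 ((coprodCx L).iCycles 0 c)).subset fun j hj h0 => hz j hj ?_
  have hc0 : HomologicalComplex.cyclesMap (coprodCx.proj L j) 0 c = 0 := by
    apply (ModuleCat.mono_iff_injective ((L j).iCycles 0)).1 inferInstance
    rw [map_zero, ← ConcreteCategory.comp_apply, HomologicalComplex.cyclesMap_i,
      ConcreteCategory.comp_apply, h0]
  rw [← hy, ← hc, ← ConcreteCategory.comp_apply, HomologicalComplex.homologyπ_naturality,
    ConcreteCategory.comp_apply, hc0, map_zero]

/-- An equivalence sends a locally finite family of complexes to a family of objects almost all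
of which have vanishing `H^0`. -/
lemma finite_homology_of_locallyFinite {R : Type} [Ring R]
    [HasDerivedCategory.{w} (ModuleCat.{v} R)] [HasDerivedCategory.{w'} (ModuleCat.{v'} S)]
    (F : DerivedCategory (ModuleCat.{v} R) ⥤ DerivedCategory (ModuleCat.{v'} S))
    [F.IsEquivalence]
    (K : ι → CochainComplex (ModuleCat.{v} R) ℤ)
    (hK : ∀ i, {j | ¬ IsZero ((K j).X i)}.Finite) :
    {j | ¬ IsZero ((homologyFunctor _ 0).obj (F.obj (Q.obj (K j))))}.Finite := by
  let L : ι → CochainComplex (ModuleCat.{v'} S) ℤ := fun j => Q.objPreimage (F.obj (Q.obj (K j)))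
  let e : ∀ j, F.obj (Q.obj (K j)) ≅ Q.obj (L j) := fun j => (Q.objObjPreimageIso _).symm
  obtain ⟨ψ, hψ⟩ := exists_prod_to_coprod F K hK L e
  let α : ∀ M : CochainComplex (ModuleCat.{v'} S) ℤ,
      (homologyFunctor _ 0).obj (Q.obj M) ≅ M.homology 0 :=
    fun M => (homologyFunctorFactors (ModuleCat.{v'} S) 0).app M
  have hα : ∀ {M N : CochainComplex (ModuleCat.{v'} S) ℤ} (f : M ⟶ N),
      (homologyFunctor _ 0).map (Q.map f) ≫ (α N).hom =
        (α M).hom ≫ HomologicalComplex.homologyMap f 0 :=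
    fun f => homologyFunctorFactors_hom_naturality f 0
  refine (finite_of_homology_map L
    ((α _).inv ≫ (homologyFunctor _ 0).map ψ ≫ (α _).hom) fun j => ?_).subset
    fun j hj h0 => hj ?_
  · rw [Category.assoc, Category.assoc, ← hα, ← Functor.map_comp_assoc, hψ, hα,
      Iso.inv_hom_id_assoc]
  · exact h0.of_iso ((homologyFunctor _ 0).mapIso (e j) ≪≫ α (L j))

end Modules

end DerivedBounded

/-- Let `k` be a field of characteristic zero, `R` and `S` two `k`-algebras,
and `F : D(R) ⥤ D(S)` a `k`-linear triangulated equivalence between the unbounded derived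
categories of left modules. If `X ∈ D(R)` has bounded cohomology (`H^n(X) = 0` for all but
finitely many `n`), then `F(X)` also has bounded cohomology. -/
theorem derived_equivalence_preserves_bounded
    (k : Type) [Field k] [CharZero k]
    (R S : Type) [Ring R] [Ring S] [Algebra k R] [Algebra k S]
    [HasDerivedCategory (ModuleCat R)] [HasDerivedCategory (ModuleCat S)]
    [CategoryTheory.Linear k (DerivedCategory (ModuleCat R))]
    [CategoryTheory.Linear k (DerivedCategory (ModuleCat S))]
    (F : DerivedCategory (ModuleCat R) ⥤ DerivedCategory (ModuleCat S))
    [F.IsEquivalence] [F.CommShift ℤ] [F.IsTriangulated] [F.Additive] [F.Linear k]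
    (X : DerivedCategory (ModuleCat R))
    (hX : {n : ℤ | ¬ IsZero ((DerivedCategory.homologyFunctor (ModuleCat R) n).obj X)}.Finite) :
    {n : ℤ | ¬ IsZero ((DerivedCategory.homologyFunctor (ModuleCat S) n).obj (F.obj X))}.Finite := by
  obtain ⟨b, hb⟩ := hX.bddAbove
  obtain ⟨a, ha⟩ := hX.bddBelow
  have : X.IsLE b := (DerivedCategory.isLE_iff X b).2 fun i hi => by
    by_contra h
    exact absurd (hb h) (by lia)
  have : X.IsGE a := (DerivedCategory.isGE_iff X a).2 fun i hi => by
    by_contra h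
    exact absurd (ha h) (by lia)
  obtain ⟨K, _, _, ⟨e⟩⟩ := DerivedCategory.exists_iso_Q_obj_of_isGE_of_isLE X a b
  -- The family of all shifts of a strictly bounded complex is locally finite.
  have hfin := DerivedBounded.finite_homology_of_locallyFinite F
    (fun n : ℤ => (shiftFunctor _ n).obj K) fun i => by
      refine (Set.finite_Icc (a - i) (b - i)).subset fun n hn => ?_
      by_contra h
      rw [Set.mem_Icc, not_and_or] at h
      apply hn
      change IsZero (K.X (i + n))
      rcases h with h | h
      · exact K.isZero_of_isStrictlyGE a _ (by lia)
      · exact K.isZero_of_isStrictlyLE b _ (by lia)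
  refine hfin.subset fun n hn h0 => hn (h0.of_iso ?_)
  exact (((DerivedCategory.homologyFunctor (ModuleCat S) 0).shiftIso n 0 n
      (by lia)).app (F.obj X)).symm ≪≫
    (DerivedCategory.homologyFunctor (ModuleCat S) 0).mapIso
      ((F.commShiftIso n).symm.app X ≪≫ F.mapIso ((shiftFunctor _ n).mapIso e ≪≫
        (DerivedCategory.Q.commShiftIso n).symm.app K))
end
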